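/- arXiv:math/0511018 — 3 statements merged into one kernel-verified Lean document; each statement's English description precedes it below -/
import Mathlib

section
/- Let n ≥ 1, 1 ≤ j ≤ n, let H be an n×n complex matrix, a ∈ ℂⁿ, and φ a (0,j)-coefficient system on ℂⁿ. Define the (0,j)-coefficient system w by w_I := Σ_{m∈I} σ^{m(I∖m)}_I a_m for strictly increasing I of length j (extended antisymmetrically), and set v_J := Σ_{m=1}^n a_m φ_{mJ} for strictly increasing J of length j−1. Then Σ'_{|J|=j−1} Σ_{k,l=1}^n H_{lk} φ_{lJ} a_k − Σ'_{|J|=j−1} Σ_{k,l=1}^n H_{lk} φ_{lJ} w_{kJ} = −Σ_{k=1}^n H_{kk} · (Σ'_{|J|=j−1, k∈J} v_J) + Σ_{k≠l} H_{lk} · (Σ'_{|J|=j−1, l∈J, k∉J} σ^{l(k∪(J∖l))}_{kJ} v_J). -/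
open scoped BigOperators
open MeasureTheory

namespace HM

/-- The finset of strictly increasing multi-indices of length `q` with entries in `Fin n`. -/
def Incr (n q : ℕ) : Finset (Fin q → Fin n) :=
  Finset.univ.filter (fun I => ∀ a b : Fin q, a < b → I a < I b)

/-- Prepend the index `k` to a `(q-1)`-tuple `J`, giving the `q`-tuple `kJ`. -/
def cons' {n : ℕ} (q : ℕ) (k : Fin n) (J : Fin (q - 1) → Fin n) : Fin q → Fin n :=
  fun i => if h : (i : ℕ) = 0 then k else J ⟨(i : ℕ) - 1, by have := i.isLt; omega⟩

/-- A (0,q)-coefficient system: an antisymmetric assignment of complex numbers to q-tuples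
(hence vanishing on tuples with a repeated index). -/
def IsCoeff {n q : ℕ} (u : (Fin q → Fin n) → ℂ) : Prop :=
  ∀ (σ : Equiv.Perm (Fin q)) (I : Fin q → Fin n),
    u (I ∘ σ) = ((Equiv.Perm.sign σ : ℤ) : ℂ) * u I

/-- `|u|²`, the sum of `|u_I|²` over strictly increasing multi-indices `I`. -/
noncomputable def nSq {n q : ℕ} (u : (Fin q → Fin n) → ℂ) : ℝ :=
  ∑ I ∈ Incr n q, ‖u I‖ ^ 2

/-- The Hessian form of a matrix `H` on coefficient systems:
`H(u,v) = Σ'_{|J|=q-1} Σ_{k,l} H_{lk} u_{lJ} conj(v_{kJ})`. -/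
noncomputable def mForm {n : ℕ} (q : ℕ) (H : Matrix (Fin n) (Fin n) ℂ)
    (u v : (Fin q → Fin n) → ℂ) : ℂ :=
  ∑ J ∈ Incr n (q - 1), ∑ k : Fin n, ∑ l : Fin n,
    H l k * u (cons' q l J) * star (v (cons' q k J))

/-- `σ^I_J`: the sign of the permutation rearranging `I` into `J`; `0` if `J` is not a
rearrangement of `I` (in particular `0` if `I` has a repeated entry). -/
def permSign {n p : ℕ} (I J : Fin p → Fin n) : ℤ :=
  if Function.Injective I then
    ∑ π : Equiv.Perm (Fin p), if J = I ∘ π then ((Equiv.Perm.sign π : ℤ)) else 0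
  else 0

/-- The Wirtinger derivative `∂f/∂z_k` of a complex-valued function, via real Fréchet
derivatives: `½(∂f/∂x_k − i ∂f/∂y_k)`. -/
noncomputable def dz {n : ℕ} (f : (Fin n → ℂ) → ℂ) (k : Fin n) (z : Fin n → ℂ) : ℂ :=
  (1/2 : ℂ) * (fderiv ℝ f z (Pi.single k 1) - Complex.I * fderiv ℝ f z (Pi.single k Complex.I))

/-- The Wirtinger derivative `∂f/∂z̄_k`: `½(∂f/∂x_k + i ∂f/∂y_k)`. -/
noncomputable def dzbar {n : ℕ} (f : (Fin n → ℂ) → ℂ) (k : Fin n) (z : Fin n → ℂ) : ℂ :=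
  (1/2 : ℂ) * (fderiv ℝ f z (Pi.single k 1) + Complex.I * fderiv ℝ f z (Pi.single k Complex.I))

/-- The mixed Wirtinger Hessian `∂²f/∂z_l∂z̄_k` of a real-valued function. -/
noncomputable def hessW {n : ℕ} (f : (Fin n → ℂ) → ℝ) (l k : Fin n) (z : Fin n → ℂ) : ℂ :=
  dz (fun w => dzbar (fun y => (f y : ℂ)) k w) l z

/-- The Hessian form `i∂∂̄f(u,u)(z) = Σ'_{|J|=q-1} Σ_{k,l} ∂²f/∂z_l∂z̄_k(z) u_{lJ} conj(u_{kJ})`. -/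
noncomputable def hForm {n : ℕ} (q : ℕ) (f : (Fin n → ℂ) → ℝ)
    (u : (Fin q → Fin n) → ℂ) (z : Fin n → ℂ) : ℂ :=
  ∑ J ∈ Incr n (q - 1), ∑ k : Fin n, ∑ l : Fin n,
    hessW f l k z * u (cons' q l J) * star (u (cons' q k J))

/-- Coefficient of `∂̄u` on the `(q+1)`-tuple `M`:
`(∂̄u)_M = Σ_k Σ'_{|J|=q} σ^{kJ}_M ∂u_J/∂z̄_k`. -/
noncomputable def dbarC {n : ℕ} (q : ℕ) (u : (Fin q → Fin n) → (Fin n → ℂ) → ℂ)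
    (M : Fin (q + 1) → Fin n) (z : Fin n → ℂ) : ℂ :=
  ∑ k : Fin n, ∑ J ∈ Incr n q, ((permSign (cons' (q + 1) k J) M : ℤ) : ℂ) * dzbar (u J) k z

/-- Coefficient of `ϑu` on the `(q-1)`-tuple `J`: `(ϑu)_J = −Σ_l ∂u_{lJ}/∂z_l`. -/
noncomputable def thetaC {n : ℕ} (q : ℕ) (u : (Fin q → Fin n) → (Fin n → ℂ) → ℂ)
    (J : Fin (q - 1) → Fin n) (z : Fin n → ℂ) : ℂ :=
  -∑ l : Fin n, dz (u (cons' q l J)) l z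

/-- Pointwise `|∂̄u|²`. -/
noncomputable def dbarSq {n : ℕ} (q : ℕ) (u : (Fin q → Fin n) → (Fin n → ℂ) → ℂ)
    (z : Fin n → ℂ) : ℝ :=
  ∑ M ∈ Incr n (q + 1), ‖dbarC q u M z‖ ^ 2

/-- Pointwise `|ϑu|²`. -/
noncomputable def thetaSq {n : ℕ} (q : ℕ) (u : (Fin q → Fin n) → (Fin n → ℂ) → ℂ)
    (z : Fin n → ℂ) : ℝ :=
  ∑ J ∈ Incr n (q - 1), ‖thetaC q u J z‖ ^ 2

/-- Remove the `i`-th entry of a `j`-tuple, giving a `(j-1)`-tuple. -/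
def removeIdx {n j : ℕ} (I : Fin j → Fin n) (i : Fin j) : Fin (j - 1) → Fin n :=
  fun t => if (t : ℕ) < (i : ℕ) then I ⟨t, by have := t.isLt; omega⟩
    else I ⟨(t : ℕ) + 1, by have := t.isLt; omega⟩

/-- The increasing `j`-tuple listing a finset `S` (with default `d` out of range). -/
def sortedTuple {n : ℕ} (j : ℕ) (S : Finset (Fin n)) (d : Fin n) : Fin j → Fin n :=
  fun t => (S.sort (· ≤ ·)).getD t d

end HM
namespace HM
open Finset

noncomputable def ee {n : ℕ} (k : Fin n) (S : Finset (Fin n)) : ℂ :=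
  ∏ x ∈ S, if x < k then -1 else 1

noncomputable def ss {n : ℕ} (k x : Fin n) : ℂ := if x < k then -1 else 1

lemma ee_insert {n : ℕ} (k x : Fin n) (S : Finset (Fin n)) (h : x ∉ S) :
    ee k (insert x S) = ss k x * ee k S := by
  unfold ee ss; rw [Finset.prod_insert h]

lemma ss_sq {n : ℕ} (k x : Fin n) : ss k x * ss k x = 1 := by
  unfold ss; split_ifs <;> norm_num

lemma ss_anti {n : ℕ} (k x : Fin n) (h : k ≠ x) : ss k x = - ss x k := by
  unfold ss
  rcases lt_or_gt_of_ne h with h | h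
  · simp [h, h.not_gt]
  · simp [h, h.not_gt]

lemma ee_sq {n : ℕ} (k : Fin n) (S : Finset (Fin n)) : ee k S * ee k S = 1 := by
  unfold ee; rw [← Finset.prod_mul_distrib]
  apply Finset.prod_eq_one; intro x _; split_ifs <;> norm_num

lemma mem_Incr {n q : ℕ} (J : Fin q → Fin n) : J ∈ Incr n q ↔ StrictMono J := by
  simp [Incr, StrictMono]

lemma sT_eq {n q : ℕ} (S : Finset (Fin n)) (h : S.card = q) (d : Fin n) :
    sortedTuple q S d = S.orderEmbOfFin h := by
  funext t
  have : (t : ℕ) < (S.sort (· ≤ ·)).length := by simp [h]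
  rw [sortedTuple, Finset.orderEmbOfFin_apply, List.getD_eq_getElem _ _ this]; rfl

lemma sT_mono {n q : ℕ} (S : Finset (Fin n)) (h : S.card = q) (d : Fin n) :
    StrictMono (sortedTuple q S d) := by
  rw [sT_eq S h]; exact (S.orderEmbOfFin h).strictMono

lemma sT_mem {n q : ℕ} (S : Finset (Fin n)) (h : S.card = q) (d : Fin n) (k : Fin n) :
    (∃ i, sortedTuple q S d i = k) ↔ k ∈ S := by
  rw [sT_eq S h]
  have := Finset.range_orderEmbOfFin S h
  rw [← Finset.mem_coe, ← this]; rfl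

lemma sT_unique {n q : ℕ} (S : Finset (Fin n)) (h : S.card = q) (d : Fin n) (f : Fin q → Fin n)
    (hf : StrictMono f) (hm : ∀ i, f i ∈ S) : f = sortedTuple q S d := by
  rw [sT_eq S h]; exact Finset.orderEmbOfFin_unique h hm hf

lemma sT_image {n q : ℕ} (S : Finset (Fin n)) (h : S.card = q) (d : Fin n) :
    Finset.image (sortedTuple q S d) Finset.univ = S := by
  ext k; simp [sT_mem S h d k]

lemma sum_Incr {n q : ℕ} (d : Fin n) (f : (Fin q → Fin n) → ℂ) :
    ∑ J ∈ Incr n q, f J = ∑ S ∈ powersetCard q univ, f (sortedTuple q S d) := by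
  symm
  refine Finset.sum_bij (fun S _ => sortedTuple q S d) ?_ ?_ ?_ ?_
  · intro S hS; rw [mem_Incr]; exact sT_mono S (mem_powersetCard.1 hS).2 d
  · intro S hS S' hS' h
    rw [← sT_image S (mem_powersetCard.1 hS).2 d, ← sT_image S' (mem_powersetCard.1 hS').2 d, h]
  · intro J hJ
    rw [mem_Incr] at hJ
    have hc : (image J univ).card = q := by
      rw [card_image_of_injective _ hJ.injective]; simp
    refine ⟨image J univ, by simp [mem_powersetCard, hc], ?_⟩
    exact (sT_unique _ hc d J hJ (by simp)).symm
  · intros; rfl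

lemma permSign_comp {n p : ℕ} (I : Fin p → Fin n) (hI : Function.Injective I)
    (σ τ : Equiv.Perm (Fin p)) :
    permSign (I ∘ σ) (I ∘ τ) = (Equiv.Perm.sign σ : ℤ) * (Equiv.Perm.sign τ : ℤ) := by
  unfold permSign
  rw [if_pos (hI.comp σ.injective), Finset.sum_eq_single (σ⁻¹ * τ)]
  · rw [if_pos]
    · simp
    · funext t; simp
  · intro π _ h
    rw [if_neg]
    intro h'
    apply h
    ext t
    have := hI (congrFun h' t)
    simp [this]
  · simp

lemma coeff_zero {n q : ℕ} (u : (Fin q → Fin n) → ℂ) (hu : IsCoeff u) (I : Fin q → Fin n)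
    (s t : Fin q) (hst : s ≠ t) (h : I s = I t) : u I = 0 := by
  have h1 := hu (Equiv.swap s t) I
  have : I ∘ (Equiv.swap s t) = I := by
    funext x
    simp only [Function.comp]
    rcases eq_or_ne x s with rfl | hx
    · simp [h]
    rcases eq_or_ne x t with rfl | hx'
    · simp [h]
    rw [Equiv.swap_apply_of_ne_of_ne hx hx']
  rw [this, Equiv.Perm.sign_swap hst] at h1
  simp at h1
  linear_combination h1 / 2

lemma cons_eq {n p : ℕ} (k : Fin n) (J : Fin p → Fin n) :
    cons' (p+1) k J = (Fin.cons k J : Fin (p+1) → Fin n) := by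
  funext t
  refine Fin.cases ?_ (fun i => ?_) t
  · simp [cons']
  · simp [cons']

lemma remove_eq {n p : ℕ} (I : Fin (p+1) → Fin n) (i : Fin (p+1)) :
    removeIdx I i = I ∘ i.succAbove := by
  funext t
  simp only [removeIdx, Function.comp, Fin.succAbove, Fin.lt_def]
  by_cases h : (t : ℕ) < (i : ℕ)
  · rw [if_pos h, if_pos (by simpa using h)]; rfl
  · rw [if_neg h, if_neg (by simpa using h)]; rfl

/-- the main sign lemma -/
lemma main_sign {n p : ℕ} (M : Finset (Fin n)) (h : M.card = p+1) (d : Fin n) (k : Fin n)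
    (hk : k ∈ M) : ∃ i : Fin (p+1), sortedTuple (p+1) M d i = k ∧
      sortedTuple (p+1) M d ∘ i.succAbove = sortedTuple p (M.erase k) d ∧
      ∃ π : Equiv.Perm (Fin (p+1)),
      cons' (p+1) k (sortedTuple p (M.erase k) d) = sortedTuple (p+1) M d ∘ π ∧
      ((Equiv.Perm.sign π : ℤ) : ℂ) = ee k (M.erase k) := by
  obtain ⟨i, hi⟩ := (sT_mem M h d k).2 hk
  have hmono := sT_mono M h d
  have hE : sortedTuple (p+1) M d ∘ i.succAbove = sortedTuple p (M.erase k) d := by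
    apply sT_unique
    · rw [card_erase_of_mem hk, h]; rfl
    · exact hmono.comp (Fin.strictMono_succAbove i)
    · intro t
      rw [mem_erase]
      refine ⟨?_, (sT_mem M h d _).1 ⟨_, rfl⟩⟩
      rw [← hi]
      exact fun hh => Fin.succAbove_ne i t (hmono.injective hh)
  refine ⟨i, hi, hE, i.cycleRange⁻¹, ?_, ?_⟩
  · rw [cons_eq]
    funext t
    refine Fin.cases ?_ (fun s => ?_) t
    · simp only [Fin.cons_zero, Function.comp, Equiv.Perm.inv_def, Fin.cycleRange_symm_zero, hi]
    · simp only [Fin.cons_succ, Function.comp, Equiv.Perm.inv_def, Fin.cycleRange_symm_succ, ← hE]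
  · rw [Equiv.Perm.sign_inv, Fin.sign_cycleRange]
    unfold ee
    have hM : M.erase k = image (sortedTuple (p+1) M d) (univ.erase i) := by
      conv_lhs => rw [← sT_image M h d, ← hi]
      rw [Finset.image_erase hmono.injective]
    rw [hM, Finset.prod_image (fun x _ y _ hxy => hmono.injective hxy)]
    simp only [← hi, hmono.lt_iff_lt]
    rw [Finset.prod_ite]
    simp only [prod_const_one, mul_one, prod_const]
    have : ((univ.erase i).filter (fun x => x < i)) = Finset.Iio i := by
      ext x; simp; exact fun h => h.ne
    rw [this, Fin.card_Iio]
    push_cast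
    rfl

end HM
namespace HM
open Finset

lemma coeff_cons {n p : ℕ} (u : (Fin (p+1) → Fin n) → ℂ) (hu : IsCoeff u) (d k : Fin n)
    (S : Finset (Fin n)) (hS : S.card = p) :
    u (cons' (p+1) k (sortedTuple p S d)) =
      if k ∈ S then 0 else ee k S * u (sortedTuple (p+1) (insert k S) d) := by
  split_ifs with h
  · obtain ⟨i, hi⟩ := (sT_mem S hS d k).2 h
    refine coeff_zero u hu _ 0 i.succ (Fin.succ_ne_zero i).symm ?_
    rw [cons_eq]; simp [hi]
  · obtain ⟨i, _, _, π, h1, h2⟩ := main_sign (p := p) (insert k S) (by simp [h, hS]) d k (by simp)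
    rw [erase_insert h] at h1 h2
    rw [h1, hu, h2]

lemma permS {n p : ℕ} (d k l : Fin n) (S : Finset (Fin n)) (hS : S.card = p)
    (hl : l ∈ S) (hk : k ∉ S) :
    ((permSign (cons' (p+1) l (sortedTuple p (insert k (S.erase l)) d))
      (cons' (p+1) k (sortedTuple p S d)) : ℤ) : ℂ) = ee l (insert k (S.erase l)) * ee k S := by
  have hM : (insert k S).card = p + 1 := by simp [hk, hS]
  have hkl : k ≠ l := fun h => hk (h ▸ hl)
  obtain ⟨i, _, _, π, h1, h2⟩ := main_sign (p := p) (insert k S) hM d k (by simp)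
  obtain ⟨i', _, _, π', h1', h2'⟩ := main_sign (p := p) (insert k S) hM d l (by simp [hl])
  rw [erase_insert hk] at h1 h2
  rw [erase_insert_of_ne hkl] at h1' h2'
  rw [h1, h1', permSign_comp _ (sT_mono _ hM d).injective, Int.cast_mul, h2, h2']

lemma w_eq {n p : ℕ} (d : Fin n) (a : Fin n → ℂ) (M : Finset (Fin n)) (hM : M.card = p + 1) :
    ∑ i : Fin (p+1), ((permSign (cons' (p+1) (sortedTuple (p+1) M d i)
        (removeIdx (sortedTuple (p+1) M d) i)) (sortedTuple (p+1) M d) : ℤ) : ℂ)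
          * a (sortedTuple (p+1) M d i)
    = ∑ m ∈ M, ee m (M.erase m) * a m := by
  have hinj := (sT_mono M hM d).injective
  conv_rhs => rw [← sT_image M hM d, Finset.sum_image (fun x _ y _ h => hinj h)]
  refine Finset.sum_congr rfl fun i _ => ?_
  rw [sT_image M hM d]
  congr 1
  obtain ⟨i', h0, h3, π, h1, h2⟩ := main_sign (p := p) M hM d (sortedTuple (p+1) M d i)
    ((sT_mem M hM d _).1 ⟨_, rfl⟩)
  obtain rfl := hinj h0
  rw [remove_eq, h3, h1, ← h2]
  have := permSign_comp _ hinj π 1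
  simp only [Equiv.Perm.coe_one, Function.comp_id, Equiv.Perm.sign_one, Units.val_one, mul_one] at this
  rw [this]

/-- the diagonal combinatorial identity -/
lemma comb_diag {n : ℕ} (p : ℕ) (a : Fin n → ℂ) (Φ : Finset (Fin n) → ℂ) (k : Fin n) :
    ∑ S ∈ (powersetCard p univ).filter (fun S => k ∉ S),
      ∑ m ∈ S, ee m (insert k (S.erase m)) * a m * Φ (insert k S)
    = ∑ S ∈ (powersetCard p univ).filter (fun S => k ∈ S),
      ∑ m ∈ univ.filter (fun m => m ∉ S), a m * (ee m S * Φ (insert m S)) := by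
  rw [Finset.sum_sigma', Finset.sum_sigma']
  refine Finset.sum_bij' (fun x _ => ⟨insert k (x.1.erase x.2), x.2⟩)
    (fun x _ => ⟨insert x.2 (x.1.erase k), x.2⟩) ?_ ?_ ?_ ?_ ?_
  · rintro ⟨S, m⟩ h
    simp only [mem_sigma, mem_filter, mem_powersetCard, mem_univ, subset_univ, true_and] at h ⊢
    obtain ⟨⟨h1, h2⟩, h3⟩ := h
    have : 0 < S.card := card_pos.2 ⟨m, h3⟩
    grind
  · rintro ⟨S, m⟩ h
    simp only [mem_sigma, mem_filter, mem_powersetCard, mem_univ, subset_univ, true_and] at h ⊢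
    obtain ⟨⟨h1, h2⟩, h3⟩ := h
    have : 0 < S.card := card_pos.2 ⟨k, h2⟩
    grind
  · rintro ⟨S, m⟩ h
    simp only [mem_sigma, mem_filter, mem_powersetCard, mem_univ, subset_univ, true_and] at h ⊢
    have : insert m ((insert k (S.erase m)).erase k) = S := by grind
    rw [this]
  · rintro ⟨S, m⟩ h
    simp only [mem_sigma, mem_filter, mem_powersetCard, mem_univ, subset_univ, true_and] at h ⊢
    have : insert k ((insert m (S.erase k)).erase m) = S := by grind
    rw [this]
  · rintro ⟨S, m⟩ h
    simp only [mem_sigma, mem_filter, mem_powersetCard, mem_univ, subset_univ, true_and] at h ⊢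
    have : insert m (insert k (S.erase m)) = insert k S := by grind
    rw [this]; ring

lemma comb_off1 {n : ℕ} (p : ℕ) (Φ : Finset (Fin n) → ℂ) (k l : Fin n) (hkl : k ≠ l) :
    ∑ S ∈ (powersetCard p univ).filter (fun S => l ∉ S ∧ k ∈ S), ee l S * Φ (insert l S)
    = ∑ S ∈ (powersetCard p univ).filter (fun S => l ∈ S ∧ k ∉ S),
      ee l (insert k (S.erase l)) * Φ (insert k S) := by
  refine Finset.sum_bij' (fun x _ => insert l (x.erase k))
    (fun x _ => insert k (x.erase l)) ?_ ?_ ?_ ?_ ?_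
  · intro S h
    simp only [mem_filter, mem_powersetCard, subset_univ, true_and] at h ⊢
    obtain ⟨h1, h2, h3⟩ := h
    have : 0 < S.card := card_pos.2 ⟨_, h3⟩
    grind
  · intro S h
    simp only [mem_filter, mem_powersetCard, subset_univ, true_and] at h ⊢
    obtain ⟨h1, h2, h3⟩ := h
    have : 0 < S.card := card_pos.2 ⟨_, h2⟩
    grind
  · intro S h
    simp only [mem_filter, mem_powersetCard, subset_univ, true_and] at h ⊢
    grind
  · intro S h
    simp only [mem_filter, mem_powersetCard, subset_univ, true_and] at h ⊢
    grind
  · intro S h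
    simp only [mem_filter, mem_powersetCard, subset_univ, true_and] at h ⊢
    have e1 : insert k ((insert l (S.erase k)).erase l) = S := by grind
    have e2 : insert k (insert l (S.erase k)) = insert l S := by grind
    rw [e1, e2]

lemma comb_off2 {n : ℕ} (p : ℕ) (a : Fin n → ℂ) (Φ : Finset (Fin n) → ℂ) (k l : Fin n)
    (hkl : k ≠ l) :
    ∑ S ∈ (powersetCard p univ).filter (fun S => l ∉ S ∧ k ∉ S),
      ∑ m ∈ S, -(ee l S * Φ (insert l S) * (ee k S * (ee m (insert k (S.erase m)) * a m)))
    = ∑ S ∈ (powersetCard p univ).filter (fun S => l ∈ S ∧ k ∉ S),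
      ∑ m ∈ univ.filter (fun m => m ∉ S ∧ m ≠ k),
        ee l (insert k (S.erase l)) * ee k S * (a m * (ee m S * Φ (insert m S))) := by
  rw [Finset.sum_sigma', Finset.sum_sigma']
  refine Finset.sum_bij' (fun x _ => ⟨insert l (x.1.erase x.2), x.2⟩)
    (fun x _ => ⟨insert x.2 (x.1.erase l), x.2⟩) ?_ ?_ ?_ ?_ ?_
  · rintro ⟨S, m⟩ h
    simp only [mem_sigma, mem_filter, mem_powersetCard, mem_univ, subset_univ, true_and] at h ⊢
    obtain ⟨⟨h1, h2⟩, h3⟩ := h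
    have : 0 < S.card := card_pos.2 ⟨m, h3⟩
    grind
  · rintro ⟨S, m⟩ h
    simp only [mem_sigma, mem_filter, mem_powersetCard, mem_univ, subset_univ, true_and] at h ⊢
    obtain ⟨⟨h1, h2⟩, h3⟩ := h
    have : 0 < S.card := card_pos.2 ⟨l, h2.1⟩
    grind
  · rintro ⟨S, m⟩ h
    simp only [mem_sigma, mem_filter, mem_powersetCard, mem_univ, subset_univ, true_and] at h ⊢
    have : insert m ((insert l (S.erase m)).erase l) = S := by grind
    rw [this]
  · rintro ⟨S, m⟩ h
    simp only [mem_sigma, mem_filter, mem_powersetCard, mem_univ, subset_univ, true_and] at h ⊢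
    have : insert l ((insert m (S.erase l)).erase m) = S := by grind
    rw [this]
  · rintro ⟨S, m⟩ h
    simp only [mem_sigma, mem_filter, mem_powersetCard, mem_univ, subset_univ, true_and] at h ⊢
    obtain ⟨⟨h1, h2, h3⟩, h4⟩ := h
    obtain ⟨K, hK, rfl⟩ : ∃ K, m ∉ K ∧ insert m K = S := ⟨S.erase m, by grind, by grind⟩
    have hl : l ∉ K := by grind
    have hk : k ∉ K := by grind
    have hmk : m ≠ k := by grind
    have hml : m ≠ l := by grind
    rw [erase_insert hK, erase_insert hl, Finset.insert_comm m l K]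
    rw [ee_insert _ _ _ hK, ee_insert _ _ _ hK, ee_insert _ _ _ hk, ee_insert _ _ _ hk,
      ee_insert _ _ _ hl, ee_insert _ _ _ hl]
    rw [ss_anti m k hmk, ss_anti m l hml, ss_anti k l hkl]
    have q1 := ss_sq k m
    have q2 := ss_sq l k
    linear_combination (ee l K * ee k K * ee m K * ss l m * a m * Φ (insert l (insert m K))) * (q1 - q2)

end HM
namespace HM
open Finset

noncomputable def vv {n : ℕ} (a : Fin n → ℂ) (Φ : Finset (Fin n) → ℂ) (S : Finset (Fin n)) : ℂ :=
  ∑ m ∈ univ.filter (fun m => m ∉ S), a m * (ee m S * Φ (insert m S))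

noncomputable def ff {n : ℕ} (Φ : Finset (Fin n) → ℂ) (l : Fin n) (S : Finset (Fin n)) : ℂ :=
  if l ∈ S then 0 else ee l S * Φ (insert l S)

noncomputable def ww {n : ℕ} (a : Fin n → ℂ) (M : Finset (Fin n)) : ℂ :=
  ∑ m ∈ M, ee m (M.erase m) * a m

lemma ww_insert {n : ℕ} (a : Fin n → ℂ) (k : Fin n) (S : Finset (Fin n)) (hk : k ∉ S) :
    ee k S * ww a (insert k S) = a k + ee k S * ∑ m ∈ S, ee m (insert k (S.erase m)) * a m := by
  unfold ww
  rw [sum_insert hk, erase_insert hk, mul_add, ← mul_assoc, ee_sq, one_mul]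
  congr 2
  refine sum_congr rfl fun m hm => ?_
  rw [erase_insert_of_ne (by rintro rfl; exact hk hm)]

lemma key_diag {n : ℕ} (p : ℕ) (a : Fin n → ℂ) (Φ : Finset (Fin n) → ℂ) (k : Fin n) :
    ∑ S ∈ powersetCard p univ, ff Φ k S * (a k - ff (ww a) k S)
    = - ∑ S ∈ (powersetCard p univ).filter (fun S => k ∈ S), vv a Φ S := by
  unfold vv
  rw [← comb_diag, sum_filter, ← sum_neg_distrib]
  refine sum_congr rfl fun S _ => ?_
  unfold ff
  by_cases hk : k ∈ S
  · simp [hk]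
  · simp only [hk, if_false, not_false_eq_true, if_true]
    rw [ww_insert a k S hk, ← sum_mul]
    have := ee_sq k S
    linear_combination (-Φ (insert k S) * ∑ m ∈ S, ee m (insert k (S.erase m)) * a m) * this

lemma key_off {n : ℕ} (p : ℕ) (a : Fin n → ℂ) (Φ : Finset (Fin n) → ℂ) (k l : Fin n)
    (hkl : k ≠ l) :
    ∑ S ∈ powersetCard p univ, ff Φ l S * (a k - ff (ww a) k S)
    = ∑ S ∈ (powersetCard p univ).filter (fun S => l ∈ S ∧ k ∉ S),
      ee l (insert k (S.erase l)) * ee k S * vv a Φ S := by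
  have h1 : ∑ S ∈ (powersetCard p univ).filter (fun S => l ∈ S ∧ k ∉ S),
      ee l (insert k (S.erase l)) * ee k S * vv a Φ S
      = ∑ S ∈ (powersetCard p univ).filter (fun S => l ∈ S ∧ k ∉ S),
          a k * (ee l (insert k (S.erase l)) * Φ (insert k S))
        + ∑ S ∈ (powersetCard p univ).filter (fun S => l ∈ S ∧ k ∉ S),
          ∑ m ∈ univ.filter (fun m => m ∉ S ∧ m ≠ k),
        ee l (insert k (S.erase l)) * ee k S * (a m * (ee m S * Φ (insert m S))) := by
    rw [← sum_add_distrib]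
    refine sum_congr rfl fun S hS => ?_
    have hk : k ∉ S := (mem_filter.1 hS).2.2
    have : univ.filter (fun m => m ∉ S) = insert k (univ.filter (fun m => m ∉ S ∧ m ≠ k)) := by
      ext m; simp; grind
    unfold vv
    rw [this, sum_insert (by simp), mul_add, mul_sum]
    have := ee_sq k S
    linear_combination (a k * ee l (insert k (S.erase l)) * Φ (insert k S)) * this
  rw [h1, ← mul_sum, ← comb_off1 p Φ k l hkl, ← comb_off2 p a Φ k l hkl, mul_sum, sum_filter,
    sum_filter, ← sum_add_distrib]
  refine sum_congr rfl fun S _ => ?_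
  unfold ff
  by_cases hl : l ∈ S
  · simp [hl]
  by_cases hk : k ∈ S
  · simp [hl, hk]; ring
  · simp only [hl, hk, if_false, not_false_eq_true, if_true, and_false, and_true]
    rw [ww_insert a k S hk, sum_neg_distrib, ← mul_sum, ← mul_sum]
    ring

lemma final {n p : ℕ} (d : Fin n)
    (H : Matrix (Fin n) (Fin n) ℂ) (a : Fin n → ℂ)
    (φ : (Fin (p+1) → Fin n) → ℂ) (hφ : HM.IsCoeff φ)
    (w : (Fin (p+1) → Fin n) → ℂ) (hw : HM.IsCoeff w)
    (hwdef : ∀ I ∈ HM.Incr n (p+1), w I = ∑ i : Fin (p+1),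
      ((HM.permSign (HM.cons' (p+1) (I i) (HM.removeIdx I i)) I : ℤ) : ℂ) * a (I i)) :
    (∑ J ∈ HM.Incr n p, ∑ k : Fin n, ∑ l : Fin n,
        H l k * φ (HM.cons' (p+1) l J) * a k)
      - (∑ J ∈ HM.Incr n p, ∑ k : Fin n, ∑ l : Fin n,
          H l k * φ (HM.cons' (p+1) l J) * w (HM.cons' (p+1) k J))
    = -(∑ k : Fin n, H k k *
          ∑ J ∈ (HM.Incr n p).filter (fun J => ∃ i, J i = k),
            ∑ m : Fin n, a m * φ (HM.cons' (p+1) m J))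
      + ∑ k : Fin n, ∑ l : Fin n, (if k = l then 0 else
          H l k * ∑ J ∈ (HM.Incr n p).filter (fun J => (∃ i, J i = l) ∧ ∀ i, J i ≠ k),
            ((HM.permSign
                (HM.cons' (p+1) l (HM.sortedTuple p
                  (insert k ((Finset.image J Finset.univ).erase l)) k))
                (HM.cons' (p+1) k J) : ℤ) : ℂ)
              * ∑ m : Fin n, a m * φ (HM.cons' (p+1) m J)) := by
  set Φ : Finset (Fin n) → ℂ := fun M => φ (sortedTuple (p+1) M d) with hΦ
  have hf : ∀ S ∈ powersetCard p (univ : Finset (Fin n)), ∀ l,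
      φ (cons' (p+1) l (sortedTuple p S d)) = ff Φ l S := fun S hS l =>
    coeff_cons φ hφ d l S (mem_powersetCard.1 hS).2
  have hg : ∀ S ∈ powersetCard p (univ : Finset (Fin n)), ∀ l,
      w (cons' (p+1) l (sortedTuple p S d)) = ff (ww a) l S := fun S hS l => by
    have hc := (mem_powersetCard.1 hS).2
    rw [coeff_cons w hw d l S hc]
    unfold ff
    split_ifs with h
    · rfl
    · have hM : (insert l S).card = p + 1 := by simp [h, hc]
      rw [hwdef _ ((mem_Incr _).2 (sT_mono _ hM d)), w_eq d a _ hM]; rfl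
  have hv : ∀ S ∈ powersetCard p (univ : Finset (Fin n)),
      ∑ m : Fin n, a m * φ (cons' (p+1) m (sortedTuple p S d)) = vv a Φ S := fun S hS => by
    unfold vv
    rw [sum_filter]
    refine sum_congr rfl fun m _ => ?_
    rw [hf S hS]; unfold ff
    by_cases h : m ∈ S <;> simp [h]
  have hL : (∑ J ∈ HM.Incr n p, ∑ k : Fin n, ∑ l : Fin n,
        H l k * φ (HM.cons' (p+1) l J) * a k)
      - (∑ J ∈ HM.Incr n p, ∑ k : Fin n, ∑ l : Fin n,
          H l k * φ (HM.cons' (p+1) l J) * w (HM.cons' (p+1) k J))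
      = ∑ k : Fin n, ∑ l : Fin n, H l k *
        ∑ S ∈ powersetCard p univ, ff Φ l S * (a k - ff (ww a) k S) := by
    simp only [mul_sum]
    rw [← sum_sub_distrib, sum_Incr d]
    simp only [← sum_sub_distrib]
    rw [sum_comm]
    refine sum_congr rfl fun k _ => ?_
    rw [sum_comm]
    refine sum_congr rfl fun l _ => ?_
    refine sum_congr rfl fun S hS => ?_
    rw [hf S hS, hg S hS]; ring
  have hA : ∀ k, ∑ J ∈ (HM.Incr n p).filter (fun J => ∃ i, J i = k),
            ∑ m : Fin n, a m * φ (HM.cons' (p+1) m J)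
      = ∑ S ∈ (powersetCard p univ).filter (fun S => k ∈ S), vv a Φ S := fun k => by
    rw [sum_filter, sum_filter, sum_Incr d]
    refine sum_congr rfl fun S hS => ?_
    rw [hv S hS]
    simp only [sT_mem S (mem_powersetCard.1 hS).2 d]
  have hB : ∀ k l, ∑ J ∈ (HM.Incr n p).filter (fun J => (∃ i, J i = l) ∧ ∀ i, J i ≠ k),
            ((HM.permSign
                (HM.cons' (p+1) l (HM.sortedTuple p
                  (insert k ((Finset.image J Finset.univ).erase l)) k))
                (HM.cons' (p+1) k J) : ℤ) : ℂ)
              * ∑ m : Fin n, a m * φ (HM.cons' (p+1) m J)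
      = ∑ S ∈ (powersetCard p univ).filter (fun S => l ∈ S ∧ k ∉ S),
      ee l (insert k (S.erase l)) * ee k S * vv a Φ S := fun k l => by
    rw [sum_filter, sum_filter, sum_Incr d]
    refine sum_congr rfl fun S hS => ?_
    have hc := (mem_powersetCard.1 hS).2
    rw [hv S hS, sT_image S hc d]
    have e1 : (∀ i, sortedTuple p S d i ≠ k) ↔ k ∉ S := by
      rw [← sT_mem S hc d k]; simp
    simp only [sT_mem S hc d, e1]
    by_cases h : l ∈ S ∧ k ∉ S
    · rw [if_pos h, if_pos h, ← permS d k l S hc h.1 h.2]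
      have hc' : (insert k (S.erase l)).card = p := by
        have : 0 < S.card := card_pos.2 ⟨l, h.1⟩
        grind
      rw [sT_eq _ hc' k, sT_eq _ hc' d]
    · rw [if_neg h, if_neg h]
  rw [hL]
  simp only [hA, hB]
  rw [← sum_neg_distrib, ← sum_add_distrib]
  refine sum_congr rfl fun k _ => ?_
  have : -(H k k * ∑ S ∈ (powersetCard p univ).filter (fun S => k ∈ S), vv a Φ S)
      = ∑ l, if k = l then
        -(H k k * ∑ S ∈ (powersetCard p univ).filter (fun S => k ∈ S), vv a Φ S) else 0 := by
    simp
  rw [this, ← sum_add_distrib]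
  refine sum_congr rfl fun l _ => ?_
  by_cases hkl : k = l
  · subst hkl
    rw [key_diag]; simp
  · rw [key_off p a Φ k l hkl]; simp [hkl]

end HM

/-- the exact error-term identity of Lemma 4.3. -/
theorem hessian_pairing_error_identity (n j : ℕ) (hn : 1 ≤ n) (hj1 : 1 ≤ j) (hjn : j ≤ n)
    (H : Matrix (Fin n) (Fin n) ℂ) (a : Fin n → ℂ)
    (φ : (Fin j → Fin n) → ℂ) (hφ : HM.IsCoeff φ)
    (w : (Fin j → Fin n) → ℂ) (hw : HM.IsCoeff w)
    (hwdef : ∀ I ∈ HM.Incr n j, w I = ∑ i : Fin j,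
      ((HM.permSign (HM.cons' j (I i) (HM.removeIdx I i)) I : ℤ) : ℂ) * a (I i)) :
    (∑ J ∈ HM.Incr n (j - 1), ∑ k : Fin n, ∑ l : Fin n,
        H l k * φ (HM.cons' j l J) * a k)
      - (∑ J ∈ HM.Incr n (j - 1), ∑ k : Fin n, ∑ l : Fin n,
          H l k * φ (HM.cons' j l J) * w (HM.cons' j k J))
    = -(∑ k : Fin n, H k k *
          ∑ J ∈ (HM.Incr n (j - 1)).filter (fun J => ∃ i, J i = k),
            ∑ m : Fin n, a m * φ (HM.cons' j m J))
      + ∑ k : Fin n, ∑ l : Fin n, (if k = l then 0 else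
          H l k * ∑ J ∈ (HM.Incr n (j - 1)).filter (fun J => (∃ i, J i = l) ∧ ∀ i, J i ≠ k),
            ((HM.permSign
                (HM.cons' j l (HM.sortedTuple (j - 1)
                  (insert k ((Finset.image J Finset.univ).erase l)) k))
                (HM.cons' j k J) : ℤ) : ℂ)
              * ∑ m : Fin n, a m * φ (HM.cons' j m J)) := by
  obtain ⟨p, rfl⟩ : ∃ p, j = p + 1 := ⟨j - 1, by omega⟩
  have d : Fin n := ⟨0, hn⟩
  exact HM.final d H a φ hφ w hw hwdef
end

section
/- Let n ≥ 1, 1 ≤ q ≤ n, and let H be an n×n Hermitian matrix whose eigenvalues μ₁,…,μₙ (with multiplicity) satisfy Σ_{i∈S} μᵢ ≥ 0 for every q-element subset S ⊆ {1,…,n}. Then for every j with q ≤ j ≤ n and every (0,j)-coefficient system u on ℂⁿ, H(u,u) ≥ 0. -/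
open scoped BigOperators
open MeasureTheory

namespace HMaux

lemma sums_ge {n : ℕ} (μ : Fin n → ℝ) (q : ℕ) (hq1 : 1 ≤ q)
    (h : ∀ S : Finset (Fin n), S.card = q → 0 ≤ ∑ i ∈ S, μ i) (j : ℕ) (hj : q ≤ j) :
    ∀ S : Finset (Fin n), S.card = j → 0 ≤ ∑ i ∈ S, μ i := by
  induction j, hj using Nat.le_induction with
  | base => exact h
  | succ j hj ih =>
    intro S hS
    have h1 : 0 ≤ ∑ i ∈ S, ∑ x ∈ S.erase i, μ x := by
      apply Finset.sum_nonneg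
      intro i hi
      apply ih
      rw [Finset.card_erase_of_mem hi, hS]; rfl
    have h2 : ∑ i ∈ S, ∑ x ∈ S.erase i, μ x = j * ∑ i ∈ S, μ i := by
      have : ∀ i ∈ S, ∑ x ∈ S.erase i, μ x = ∑ x ∈ S, μ x - μ i := by
        intro i hi
        rw [← Finset.add_sum_erase S μ hi]; ring
      rw [Finset.sum_congr rfl this, Finset.sum_sub_distrib, Finset.sum_const, hS]
      simp; ring
    rw [h2] at h1
    have hjp : (0 : ℝ) < j := by exact_mod_cast (by omega : 0 < j)
    exact nonneg_of_mul_nonneg_right h1 hjp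

lemma coeff_zero {n q : ℕ} {u : (Fin q → Fin n) → ℂ} (hu : HM.IsCoeff u)
    (I : Fin q → Fin n) (hI : ¬ Function.Injective I) : u I = 0 := by
  simp only [Function.Injective, not_forall] at hI
  obtain ⟨a, b, hab, hne⟩ := hI
  have h := hu (Equiv.swap a b) I
  have h2 : I ∘ Equiv.swap a b = I := by
    funext x
    simp only [Function.comp]
    rcases eq_or_ne x a with rfl | hxa
    · simp [hab]
    · rcases eq_or_ne x b with rfl | hxb
      · simp [hab]
      · rw [Equiv.swap_apply_of_ne_of_ne hxa hxb]
  rw [h2, Equiv.Perm.sign_swap hne] at h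
  simp at h
  linear_combination (1/2 : ℂ) * h

lemma existsUnique_sort {n m : ℕ} (J : Fin m → Fin n) (hJ : Function.Injective J) :
    (Finset.univ.filter (fun σ : Equiv.Perm (Fin m) => J ∘ σ ∈ HM.Incr n m)).card = 1 := by
  rw [Finset.card_eq_one]
  refine ⟨Tuple.sort J, ?_⟩
  ext σ
  simp only [HM.Incr, Finset.mem_filter, Finset.mem_univ, true_and, Finset.mem_singleton]
  have hs : StrictMono (J ∘ Tuple.sort J) :=
    (Tuple.monotone_sort J).strictMono_of_injective (hJ.comp (Equiv.injective _))
  constructor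
  · intro h
    have h1 : StrictMono (J ∘ σ) := fun a b hab => h a b hab
    have h2 := Tuple.unique_monotone h1.monotone hs.monotone
    ext x
    have := hJ (congrFun h2 x)
    rw [this]
  · rintro rfl a b hab
    exact hs hab

lemma sum_all {n m : ℕ} (f : (Fin m → Fin n) → ℝ)
    (hf : ∀ (σ : Equiv.Perm (Fin m)) J, f (J ∘ σ) = f J)
    (hf0 : ∀ J, ¬ Function.Injective J → f J = 0) :
    (Fintype.card (Equiv.Perm (Fin m)) : ℝ) * ∑ J ∈ HM.Incr n m, f J = ∑ J, f J := by
  classical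
  have h1 : ∀ σ : Equiv.Perm (Fin m), ∑ J ∈ HM.Incr n m, f J
      = ∑ J, if J ∘ σ ∈ HM.Incr n m then f J else 0 := by
    intro σ
    rw [show ∑ J ∈ HM.Incr n m, f J = ∑ J, if J ∈ HM.Incr n m then f J else 0 by
      rw [← Finset.sum_filter]; congr 1; ext; simp]
    rw [← Equiv.sum_comp (Equiv.arrowCongr σ.symm (Equiv.refl (Fin n)))]
    apply Finset.sum_congr rfl
    intro J _
    have : (Equiv.arrowCongr σ.symm (Equiv.refl (Fin n))) J = J ∘ σ := by
      funext x; simp [Equiv.arrowCongr]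
    rw [this, hf]
  have h2 : (Fintype.card (Equiv.Perm (Fin m)) : ℝ) * ∑ J ∈ HM.Incr n m, f J
      = ∑ σ : Equiv.Perm (Fin m), ∑ J, if J ∘ σ ∈ HM.Incr n m then f J else 0 := by
    rw [← Finset.sum_congr rfl (fun σ _ => h1 σ)]
    simp
  rw [h2, Finset.sum_comm]
  apply Finset.sum_congr rfl
  intro J _
  by_cases hJ : Function.Injective J
  · rw [← Finset.sum_filter, Finset.sum_const, existsUnique_sort J hJ, one_smul]
  · simp [hf0 J hJ]

/-- transformed coefficients -/
noncomputable def tr {n q : ℕ} (U : Matrix (Fin n) (Fin n) ℂ) (u : (Fin q → Fin n) → ℂ) :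
    (Fin q → Fin n) → ℂ :=
  fun I => ∑ K : Fin q → Fin n, (∏ t, U (K t) (I t)) * u K

lemma tr_coeff {n q : ℕ} (U : Matrix (Fin n) (Fin n) ℂ) {u : (Fin q → Fin n) → ℂ}
    (hu : HM.IsCoeff u) : HM.IsCoeff (tr U u) := by
  intro σ I
  unfold tr
  rw [← Equiv.sum_comp (Equiv.arrowCongr σ.symm (Equiv.refl (Fin n))), Finset.mul_sum]
  apply Finset.sum_congr rfl
  intro K _
  have : (Equiv.arrowCongr σ.symm (Equiv.refl (Fin n))) K = K ∘ σ := by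
    funext x; simp [Equiv.arrowCongr]
  rw [this, hu]
  have h2 : ∏ t, U ((K ∘ σ) t) ((I ∘ σ) t) = ∏ t, U (K t) (I t) :=
    Equiv.prod_comp σ (fun t => U (K t) (I t))
  rw [h2]; ring

lemma perm_avg {n m : ℕ} (μ : Fin n → ℝ) (g : (Fin (m+1) → Fin n) → ℝ)
    (hg : ∀ (σ : Equiv.Perm (Fin (m+1))) J, g (J ∘ σ) = g J) :
    ((m+1 : ℕ) : ℝ) * ∑ I, μ (I 0) * g I = ∑ I, (∑ t, μ (I t)) * g I := by
  have h1 : ∀ t : Fin (m+1), ∑ I, μ (I 0) * g I = ∑ I, μ (I t) * g I := by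
    intro t
    rw [← Equiv.sum_comp (Equiv.arrowCongr (Equiv.swap 0 t).symm (Equiv.refl (Fin n)))]
    apply Finset.sum_congr rfl
    intro J _
    have : (Equiv.arrowCongr (Equiv.swap 0 t).symm (Equiv.refl (Fin n))) J
        = J ∘ (Equiv.swap 0 t) := by
      funext x; simp [Equiv.arrowCongr]
    rw [this, hg]
    simp
  simp_rw [Finset.sum_mul]
  rw [Finset.sum_comm, ← Finset.sum_congr rfl (fun t _ => h1 t)]
  simp

lemma expand {n m : ℕ} (U : Matrix (Fin n) (Fin n) ℂ) (μ : Fin n → ℝ)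
    (H : Matrix (Fin n) (Fin n) ℂ)
    (hU : ∀ a b, ∑ x, U a x * star (U b x) = if a = b then 1 else 0)
    (hH : ∀ a b, ∑ x, (μ x : ℂ) * (U a x * star (U b x)) = H a b)
    (u : (Fin (m+1) → Fin n) → ℂ) :
    ∑ I, (μ (I 0) : ℂ) * (tr U u I * star (tr U u I)) =
      ∑ J : Fin m → Fin n, ∑ k, ∑ l, H l k * u (Fin.cons l J) * star (u (Fin.cons k J)) := by
  classical
  have key : ∀ K L : Fin (m+1) → Fin n,
      ∑ I : Fin (m+1) → Fin n, (μ (I 0) : ℂ) * ((∏ t, U (K t) (I t)) * ∏ t, star (U (L t) (I t)))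
      = H (K 0) (L 0) * if Fin.tail K = Fin.tail L then 1 else 0 := by
    intro K L
    have e : ∀ I : Fin (m+1) → Fin n,
        (μ (I 0) : ℂ) * ((∏ t, U (K t) (I t)) * ∏ t, star (U (L t) (I t)))
        = ∏ t, ((if t = 0 then (μ (I t) : ℂ) else 1) * (U (K t) (I t) * star (U (L t) (I t)))) := by
      intro I
      rw [← Finset.prod_mul_distrib, Finset.prod_mul_distrib (f := fun t => if t = 0 then (μ (I t) : ℂ) else 1)]
      congr 1
      simp [Fin.prod_univ_succ]
    rw [Finset.sum_congr rfl (fun I _ => e I)]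
    have := (Finset.prod_univ_sum (fun _ : Fin (m+1) => (Finset.univ : Finset (Fin n)))
      (fun t x => ((if t = 0 then (μ x : ℂ) else 1) * (U (K t) x * star (U (L t) x)))))
    rw [Fintype.piFinset_univ] at this
    rw [← this, Fin.prod_univ_succ]
    simp only [if_true, Fin.succ_ne_zero, if_false, one_mul, hU, hH]
    congr 1
    rw [Finset.prod_ite_zero]
    simp [funext_iff, Fin.tail]
  have h1 : ∑ I, (μ (I 0) : ℂ) * (tr U u I * star (tr U u I)) =
      ∑ K, ∑ L, u K * star (u L) * (H (K 0) (L 0) * if Fin.tail K = Fin.tail L then 1 else 0) := by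
    simp_rw [← key, Finset.mul_sum]
    have : ∀ I, (μ (I 0) : ℂ) * (tr U u I * star (tr U u I)) =
      ∑ K, ∑ L, u K * star (u L) * ((μ (I 0) : ℂ) * ((∏ t, U (K t) (I t)) * ∏ t, star (U (L t) (I t)))) := by
      intro I
      unfold tr
      rw [star_sum, Finset.sum_mul_sum, Finset.mul_sum]
      refine Finset.sum_congr rfl fun K _ => ?_
      rw [Finset.mul_sum]
      refine Finset.sum_congr rfl fun L _ => ?_
      rw [star_mul', star_prod]; ring
    rw [Finset.sum_congr rfl (fun I _ => this I), Finset.sum_comm]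
    refine Finset.sum_congr rfl fun K _ => ?_
    rw [Finset.sum_comm]
  rw [h1]
  have h2 : ∀ F : (Fin (m+1) → Fin n) → ℂ,
      ∑ K, F K = ∑ J : Fin m → Fin n, ∑ l : Fin n, F (Fin.cons l J) := by
    intro F
    have h3 := Equiv.sum_comp (Fin.consEquiv (fun _ : Fin (m+1) => Fin n)) F
    rw [← h3, Fintype.sum_prod_type, Finset.sum_comm]
    rfl
  rw [h2]
  refine Finset.sum_congr rfl fun J _ => ?_
  refine Eq.trans ?_ Finset.sum_comm
  refine Finset.sum_congr rfl fun l _ => ?_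
  rw [h2]
  simp only [Fin.tail_cons, Fin.cons_zero]
  rw [Finset.sum_eq_single J]
  · refine Finset.sum_congr rfl fun k _ => ?_
    simp; ring
  · intro b _ hb
    simp [Ne.symm hb]
  · simp

end HMaux

/-- if all `q`-element eigenvalue sums of a Hermitian matrix `H` are
nonnegative, then the Hessian form of `H` is nonnegative on (0,j)-coefficient systems
for every `q ≤ j ≤ n`. -/
theorem hessian_form_nonneg_of_eigenvalue_sums (n q : ℕ) (hn : 1 ≤ n) (hq1 : 1 ≤ q)
    (hqn : q ≤ n)
    (H : Matrix (Fin n) (Fin n) ℂ) (hH : H.IsHermitian)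
    (heig : ∀ S : Finset (Fin n), S.card = q → 0 ≤ ∑ i ∈ S, hH.eigenvalues i) :
    ∀ j : ℕ, q ≤ j → j ≤ n → ∀ u : (Fin j → Fin n) → ℂ, HM.IsCoeff u →
      0 ≤ (HM.mForm j H u u).re := by
  classical
  intro j hqj hjn u hu
  obtain ⟨m, rfl⟩ : ∃ m, j = m + 1 := ⟨j - 1, by omega⟩
  have hS := HMaux.sums_ge hH.eigenvalues q hq1 heig (m+1) hqj
  set μ := hH.eigenvalues with hμ
  set U : Matrix (Fin n) (Fin n) ℂ := (hH.eigenvectorUnitary : Matrix (Fin n) (Fin n) ℂ) with hUdef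
  have hU : ∀ a b, ∑ x, U a x * star (U b x) = if a = b then 1 else 0 := by
    intro a b
    have h := Unitary.mul_star_self_of_mem hH.eigenvectorUnitary.2
    have h' := congrFun (congrFun h a) b
    rw [Matrix.mul_apply, Matrix.one_apply] at h'
    exact h'
  have hHe : ∀ a b, ∑ x, (μ x : ℂ) * (U a x * star (U b x)) = H a b := by
    intro a b
    have h := hH.spectral_theorem
    rw [Unitary.conjStarAlgAut_apply] at h
    have h' := congrFun (congrFun h a) b
    rw [Matrix.mul_apply] at h'
    rw [h']
    refine Finset.sum_congr rfl fun x _ => ?_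
    rw [Matrix.mul_diagonal]
    simp only [Matrix.star_apply, Function.comp]
    rw [← hμ, ← hUdef]
    simp only [Complex.coe_algebraMap]
    ring
  have hexp := HMaux.expand U μ H hU hHe u
  set w := HMaux.tr U u with hw
  have hwc : HM.IsCoeff w := HMaux.tr_coeff U hu
  -- the sum over all tuples
  set f : (Fin m → Fin n) → ℝ := fun J =>
    (∑ k, ∑ l, H l k * u (Fin.cons l J) * star (u (Fin.cons k J))).re with hf
  have hform : (HM.mForm (m+1) H u u).re = ∑ J ∈ HM.Incr n m, f J := by
    unfold HM.mForm
    rw [Complex.re_sum]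
    have hc : ∀ (k : Fin n) (J : Fin m → Fin n), HM.cons' (m+1) k J = Fin.cons k J := by
      intro k J
      funext i
      refine Fin.cases ?_ (fun i => ?_) i
      · simp [HM.cons']
      · simp [HM.cons']
    refine Finset.sum_congr rfl fun J _ => ?_
    simp only [hf]
    congr 1
    refine Finset.sum_congr rfl fun k _ => Finset.sum_congr rfl fun l _ => ?_
    rw [← hc, ← hc]
  have hsgn : ∀ (σ : Equiv.Perm (Fin m)) (k : Fin n) (J : Fin m → Fin n),
      u (Fin.cons k (J ∘ σ)) = ((Equiv.Perm.sign σ : ℤ) : ℂ) * u (Fin.cons k J) := by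
    intro σ k J
    have h := hu (Equiv.Perm.decomposeFin.symm (0, σ)) (Fin.cons k J)
    rw [Equiv.Perm.decomposeFin.symm_sign] at h
    simp only [if_true, one_mul] at h
    rw [← h]
    congr 1
    funext i
    refine Fin.cases ?_ (fun i => ?_) i
    · simp
    · simp [Equiv.Perm.decomposeFin_symm_apply_succ]
  have hss : ∀ σ : Equiv.Perm (Fin m),
      ((Equiv.Perm.sign σ : ℤ) : ℂ) * star ((Equiv.Perm.sign σ : ℤ) : ℂ) = 1 := by
    intro σ
    rcases Int.units_eq_one_or (Equiv.Perm.sign σ) with h | h <;> simp [h]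
  have hall := HMaux.sum_all f (by
    intro σ J
    simp only [hf]
    congr 1
    refine Finset.sum_congr rfl fun k _ => Finset.sum_congr rfl fun l _ => ?_
    rw [hsgn, hsgn, star_mul']
    linear_combination (H l k * u (Fin.cons l J) * star (u (Fin.cons k J))) * hss σ) (by
    intro J hJ
    have hz : ∀ k, u (Fin.cons k J) = 0 := by
      intro k
      apply HMaux.coeff_zero hu
      intro hc
      apply hJ
      intro a b hab
      have := hc (a₁ := a.succ) (a₂ := b.succ) (by simpa using hab)
      exact Fin.succ_injective _ this
    simp [hf, hz])
  have htot : ∑ J, f J = ∑ I, μ (I 0) * Complex.normSq (w I) := by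
    have := congrArg Complex.re hexp
    rw [Complex.re_sum, Complex.re_sum] at this
    rw [← this]
    refine Finset.sum_congr rfl fun I _ => ?_
    rw [← Complex.ofReal_re (μ (I 0) * Complex.normSq (w I))]
    congr 1
    rw [Complex.ofReal_mul, ← Complex.mul_conj]
    rfl
  have havg := HMaux.perm_avg μ (fun I => Complex.normSq (w I)) (by
    intro σ J
    rw [hwc σ J]
    rcases Int.units_eq_one_or (Equiv.Perm.sign σ) with h | h <;> simp [h])
  have hnn : 0 ≤ ∑ I, (∑ t, μ (I t)) * Complex.normSq (w I) := by
    apply Finset.sum_nonneg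
    intro I _
    by_cases hI : Function.Injective I
    · apply mul_nonneg _ (Complex.normSq_nonneg _)
      have := hS (Finset.univ.map ⟨I, hI⟩) (by simp)
      simpa using this
    · simp [HMaux.coeff_zero hwc I hI]
  rw [← havg] at hnn
  have h1 := nonneg_of_mul_nonneg_right hnn (by positivity)
  rw [← htot, ← hall] at h1
  rw [hform]
  exact nonneg_of_mul_nonneg_right h1 (by exact_mod_cast Fintype.card_pos)
end

section
/- Let U ⊆ ℂⁿ be open, f : U → ℝ a C² function, z ∈ U with f(z) < 0, and s ∈ (0,1). Then −(−f)^s is twice differentiable at z and for every (0,q)-coefficient system u (1 ≤ q ≤ n): i∂∂̄(−(−f)^s)(u,u)(z) = s(−f(z))^{s−1} · i∂∂̄f(u,u)(z) + s(1−s)(−f(z))^{s−2} · Σ'_{|J|=q−1} |Σ_{k=1}^n (∂f/∂z_k)(z) u_{kJ}|². -/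
open scoped BigOperators
open MeasureTheory

namespace HM

theorem fderiv_ofReal' {n : ℕ} {f : (Fin n → ℂ) → ℝ} {w : Fin n → ℂ}
    (hf : DifferentiableAt ℝ f w) (v : Fin n → ℂ) :
    fderiv ℝ (fun y => ((f y : ℝ) : ℂ)) w v = ((fderiv ℝ f w v : ℝ) : ℂ) := by
  have h := (Complex.ofRealCLM.hasFDerivAt (x := f w)).comp w hf.hasFDerivAt
  have h2 : HasFDerivAt (fun y => ((f y : ℝ) : ℂ)) (Complex.ofRealCLM.comp (fderiv ℝ f w)) w := h
  rw [h2.fderiv]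
  simp

theorem fderiv_chain {n : ℕ} {f : (Fin n → ℂ) → ℝ} {w : Fin n → ℂ} {φ : ℝ → ℝ} {φ' : ℝ}
    (hφ : HasDerivAt φ φ' (f w)) (hf : DifferentiableAt ℝ f w) (v : Fin n → ℂ) :
    fderiv ℝ (fun y => ((φ (f y) : ℝ) : ℂ)) w v
      = (φ' : ℂ) * fderiv ℝ (fun y => ((f y : ℝ) : ℂ)) w v := by
  have h : HasFDerivAt (fun y => φ (f y)) (φ' • fderiv ℝ f w) w :=
    hφ.comp_hasFDerivAt w hf.hasFDerivAt
  rw [fderiv_ofReal' h.differentiableAt, fderiv_ofReal' hf, h.fderiv]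
  simp

theorem dz_chain {n : ℕ} {f : (Fin n → ℂ) → ℝ} {w : Fin n → ℂ} {φ : ℝ → ℝ} {φ' : ℝ}
    (hφ : HasDerivAt φ φ' (f w)) (hf : DifferentiableAt ℝ f w) (k : Fin n) :
    dz (fun y => ((φ (f y) : ℝ) : ℂ)) k w = (φ' : ℂ) * dz (fun y => ((f y : ℝ) : ℂ)) k w := by
  unfold dz
  rw [fderiv_chain hφ hf, fderiv_chain hφ hf]
  ring

theorem dzbar_chain {n : ℕ} {f : (Fin n → ℂ) → ℝ} {w : Fin n → ℂ} {φ : ℝ → ℝ} {φ' : ℝ}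
    (hφ : HasDerivAt φ φ' (f w)) (hf : DifferentiableAt ℝ f w) (k : Fin n) :
    dzbar (fun y => ((φ (f y) : ℝ) : ℂ)) k w
      = (φ' : ℂ) * dzbar (fun y => ((f y : ℝ) : ℂ)) k w := by
  unfold dzbar
  rw [fderiv_chain hφ hf, fderiv_chain hφ hf]
  ring

theorem dzbar_eq_star {n : ℕ} {f : (Fin n → ℂ) → ℝ} {w : Fin n → ℂ}
    (hf : DifferentiableAt ℝ f w) (k : Fin n) :
    dzbar (fun y => ((f y : ℝ) : ℂ)) k w = star (dz (fun y => ((f y : ℝ) : ℂ)) k w) := by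
  unfold dz dzbar
  rw [fderiv_ofReal' hf, fderiv_ofReal' hf]
  simp

theorem dz_mul {n : ℕ} {a b : (Fin n → ℂ) → ℂ} {w : Fin n → ℂ}
    (ha : DifferentiableAt ℝ a w) (hb : DifferentiableAt ℝ b w) (k : Fin n) :
    dz (fun y => a y * b y) k w = a w * dz b k w + dz a k w * b w := by
  unfold dz
  rw [fderiv_fun_mul ha hb]
  simp
  ring

theorem hasDerivAt_p (s t : ℝ) (ht : t < 0) :
    HasDerivAt (fun x : ℝ => -((-x) ^ s)) (s * (-t) ^ (s - 1)) t := by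
  have h0 : HasDerivAt (fun x : ℝ => -x) (-1) t := hasDerivAt_neg t
  have h : HasDerivAt (fun x : ℝ => -((-x) ^ s)) (-(-1 * s * (-t) ^ (s - 1))) t :=
    (h0.rpow_const (p := s) (Or.inl (by linarith))).neg
  have e : s * (-t) ^ (s - 1) = -(-1 * s * (-t) ^ (s - 1)) := by ring
  rw [e]
  exact h

theorem hasDerivAt_p' (s t : ℝ) (ht : t < 0) :
    HasDerivAt (fun x : ℝ => s * (-x) ^ (s - 1)) (s * (1 - s) * (-t) ^ (s - 2)) t := by
  have h0 : HasDerivAt (fun x : ℝ => -x) (-1) t := hasDerivAt_neg t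
  have h : HasDerivAt (fun x : ℝ => s * (-x) ^ (s - 1))
      (s * (-1 * (s - 1) * (-t) ^ (s - 1 - 1))) t :=
    (h0.rpow_const (p := s - 1) (Or.inl (by linarith))).const_mul s
  have e : s * (1 - s) * (-t) ^ (s - 2) = s * (-1 * (s - 1) * (-t) ^ (s - 1 - 1)) := by
    rw [show s - 1 - 1 = s - 2 by ring]
    ring
  rw [e]
  exact h

theorem hessW_power {n : ℕ} {f : (Fin n → ℂ) → ℝ} {z : Fin n → ℂ} (hf : ContDiffAt ℝ 2 f z)
    (hfz : f z < 0) (s : ℝ) (l k : Fin n) :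
    hessW (fun w => -((-(f w)) ^ s)) l k z
      = ((s * (-(f z)) ^ (s - 1) : ℝ) : ℂ) * hessW f l k z
        + ((s * (1 - s) * (-(f z)) ^ (s - 2) : ℝ) : ℂ) *
          (dz (fun w => ((f w : ℝ) : ℂ)) l z * star (dz (fun w => ((f w : ℝ) : ℂ)) k z)) := by
  have hd : DifferentiableAt ℝ f z := hf.differentiableAt (by norm_num)
  have hev : (fun w => dzbar (fun y => ((-((-(f y)) ^ s) : ℝ) : ℂ)) k w) =ᶠ[nhds z]
      fun w => ((s * (-(f w)) ^ (s - 1) : ℝ) : ℂ) * dzbar (fun y => ((f y : ℝ) : ℂ)) k w := by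
    filter_upwards [hf.eventually (by simp), hd.continuousAt.eventually_lt_const hfz] with w h1 h2
    exact dzbar_chain (hasDerivAt_p s _ h2) (h1.differentiableAt (by norm_num)) k
  have hF : ContDiffAt ℝ 2 (fun y => ((f y : ℝ) : ℂ)) z :=
    (Complex.ofRealCLM.contDiff.contDiffAt).comp z hf
  have hF1 : DifferentiableAt ℝ (fderiv ℝ (fun y => ((f y : ℝ) : ℂ))) z :=
    (hF.fderiv_right (m := 1) (by norm_num)).differentiableAt (by norm_num)
  have hb : DifferentiableAt ℝ (fun w => dzbar (fun y => ((f y : ℝ) : ℂ)) k w) z := by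
    unfold dzbar
    exact ((hF1.clm_apply (differentiableAt_const _)).add
      ((hF1.clm_apply (differentiableAt_const _)).const_mul _)).const_mul _
  have ha : DifferentiableAt ℝ (fun w => ((s * (-(f w)) ^ (s - 1) : ℝ) : ℂ)) z := by
    have h : HasFDerivAt (fun w => s * (-(f w)) ^ (s - 1)) _ z :=
      (hasDerivAt_p' s _ hfz).comp_hasFDerivAt z hd.hasFDerivAt
    exact (Complex.ofRealCLM.differentiableAt).comp z h.differentiableAt
  have e1 : hessW (fun w => -((-(f w)) ^ s)) l k z
      = dz (fun w => ((s * (-(f w)) ^ (s - 1) : ℝ) : ℂ)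
        * dzbar (fun y => ((f y : ℝ) : ℂ)) k w) l z := by
    unfold hessW
    rw [dz, dz, hev.fderiv_eq]
  rw [e1, dz_mul ha hb, dz_chain (φ := fun x => s * (-x) ^ (s - 1)) (hasDerivAt_p' s _ hfz) hd,
    dzbar_eq_star hd]
  unfold hessW
  ring

theorem normSq_sum {n : ℕ} (d v : Fin n → ℂ) :
    ((‖∑ k, d k * v k‖ ^ 2 : ℝ) : ℂ)
      = ∑ k, ∑ l, (d l * star (d k)) * v l * star (v k) := by
  push_cast
  rw [← Complex.mul_conj']
  rw [map_sum, Finset.sum_mul_sum, Finset.sum_comm]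
  refine Finset.sum_congr rfl fun k _ => Finset.sum_congr rfl fun l _ => ?_
  simp
  ring

end HM

/-- the Hessian of `−(−f)^s` at a point where `f < 0`:
`i∂∂̄(−(−f)^s)(u,u) = s(−f)^{s−1} i∂∂̄f(u,u) + s(1−s)(−f)^{s−2} Σ'_J |Σ_k ∂f/∂z_k u_{kJ}|²`. -/
theorem hessian_of_power (n : ℕ) (hn : 1 ≤ n)
    (U : Set (Fin n → ℂ)) (hU : IsOpen U)
    (f : (Fin n → ℂ) → ℝ) (hf : ContDiffOn ℝ 2 f U)
    (z : Fin n → ℂ) (hz : z ∈ U) (hfz : f z < 0)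
    (s : ℝ) (hs : s ∈ Set.Ioo (0 : ℝ) 1) :
    ContDiffAt ℝ 2 (fun w => -((-(f w)) ^ s)) z ∧
      ∀ q : ℕ, 1 ≤ q → q ≤ n → ∀ u : (Fin q → Fin n) → ℂ, HM.IsCoeff u →
        HM.hForm q (fun w => -((-(f w)) ^ s)) u z
          = ((s * (-(f z)) ^ (s - 1) : ℝ) : ℂ) * HM.hForm q f u z
            + ((s * (1 - s) * (-(f z)) ^ (s - 2) : ℝ) : ℂ) *
                ((∑ J ∈ HM.Incr n (q - 1),
                  ‖∑ k : Fin n, HM.dz (fun w => ((f w : ℝ) : ℂ)) k z *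
                    u (HM.cons' q k J)‖ ^ 2 : ℝ) : ℂ) := by
  have hfa : ContDiffAt ℝ 2 f z := hf.contDiffAt (hU.mem_nhds hz)
  refine ⟨(hfa.neg.rpow_const_of_ne (by simpa using hfz.ne)).neg, ?_⟩
  intro q _ _ u _
  rw [Complex.ofReal_sum]
  simp only [HM.normSq_sum, HM.hForm, HM.hessW_power hfa hfz, Finset.mul_sum,
    ← Finset.sum_add_distrib]
  refine Finset.sum_congr rfl fun J _ => Finset.sum_congr rfl fun k _ =>
    Finset.sum_congr rfl fun l _ => ?_
  ring
end
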